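/- arXiv:2010.01275 — 3 statements merged into one kernel-verified Lean document; each statement's English description precedes it below -/
import Mathlib

section
/- Let s, y ∈ ℝⁿ with y ≠ 0, let H be a symmetric positive definite n×n real matrix, and let β > 0 with sᵀy + 1/β ≠ 0 and sᵀy + 2/β ≠ 0. Set γ = 1/(sᵀy + 1/β), ω = 1/(sᵀy + 2/β), and H₊ = (I − ω s yᵀ) H (I − ω y sᵀ) + ω[γ/ω + (γ − ω)(yᵀ H y)] s sᵀ. Then H₊ is positive definite if and only if the SP-BFGS curvature condition sᵀy > −1/β holds. -/
open Matrix

/-!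
Write `τ = 1/β` and `B = I - ω y sᵀ`. Since `γ - ω = τγω`, the update is
`BᵀHB + γ (1 + τω² yᵀHy) s sᵀ`. A nonzero `x` with `B x = 0` is a multiple of `y` with `sᵀx ≠ 0`,
so for `γ > 0` the rank-one term makes up for the kernel of `B`. Conversely `B y = 2τω y` gives
`yᵀH₊y = γ ((sᵀy)² + τ yᵀHy)`, whose sign forces `γ > 0`, i.e. `sᵀy > -τ`.
-/

section QuadraticForms

variable {m n R : Type*}

lemma posSemidef_smul_vecMulVec_self [CommRing R] [LinearOrder R] [IsStrictOrderedRing R]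
    [StarRing R] [TrivialStar R] {c : R} (hc : 0 ≤ c) (s : n → R) :
    (c • vecMulVec s s).PosSemidef := by
  refine ⟨?_, fun x => ?_⟩
  · rw [IsHermitian, conjTranspose_eq_transpose_of_trivial, transpose_smul, transpose_vecMulVec]
  · have hsq : (x.sum fun i xi => x.sum fun j xj => star xi * (c • vecMulVec s s) i j * xj) =
        c * (x.sum fun i xi => s i * xi) ^ 2 := by
      rw [sq, Finsupp.sum, Finsupp.sum, Finset.sum_mul_sum]
      simp only [Finsupp.sum, Finset.mul_sum, star_trivial, Matrix.smul_apply, vecMulVec_apply,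
        smul_eq_mul]
      exact Finset.sum_congr rfl fun i _ => Finset.sum_congr rfl fun j _ => by ring
    rw [hsq]
    positivity

variable [Fintype m] [Fintype n]

lemma dotProduct_mul_mul_mulVec {l k : Type*} [Fintype l] [Fintype k] [NonUnitalSemiring R]
    (A : Matrix l m R) (B : Matrix m n R) (C : Matrix n k R) (u : l → R) (v : k → R) :
    u ⬝ᵥ (A * B * C) *ᵥ v = (u ᵥ* A) ⬝ᵥ B *ᵥ (C *ᵥ v) := by
  simp only [dotProduct_mulVec, vecMul_vecMul]

lemma posDef_conjTranspose_mul_mul_add [Ring R] [PartialOrder R] [StarRing R] [AddLeftMono R]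
    {A : Matrix m m R} {B : Matrix m n R} {C : Matrix n n R} (hA : A.PosDef) (hC : C.PosSemidef)
    (hker : ∀ x ≠ 0, B *ᵥ x = 0 → 0 < star x ⬝ᵥ C *ᵥ x) : (Bᴴ * A * B + C).PosDef := by
  refine .of_dotProduct_mulVec_pos
    ((isHermitian_conjTranspose_mul_mul B hA.isHermitian).add hC.isHermitian) fun x hx => ?_
  rw [add_mulVec, dotProduct_add, dotProduct_mul_mul_mulVec, ← star_mulVec]
  by_cases hBx : B *ᵥ x = 0
  · simpa only [hBx, mulVec_zero, dotProduct_zero, zero_add] using hker x hx hBx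
  · exact add_pos_of_pos_of_nonneg (hA.dotProduct_mulVec_pos hBx) (hC.dotProduct_mulVec_nonneg x)

lemma dotProduct_smul_vecMulVec_self_mulVec [CommSemiring R] (c : R) (s x : n → R) :
    x ⬝ᵥ (c • vecMulVec s s) *ᵥ x = c * (s ⬝ᵥ x) ^ 2 := by
  rw [smul_mulVec, vecMulVec_mulVec, op_smul_eq_smul, dotProduct_smul, dotProduct_smul,
    dotProduct_comm x s, smul_eq_mul, smul_eq_mul, sq]

lemma one_sub_smul_vecMulVec_mulVec [CommRing R] [DecidableEq n] (a : R) (u v x : n → R) :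
    (1 - a • vecMulVec u v) *ᵥ x = x - (a * (v ⬝ᵥ x)) • u := by
  rw [sub_mulVec, one_mulVec, smul_mulVec, vecMulVec_mulVec, op_smul_eq_smul, smul_smul]

end QuadraticForms

section Update

variable {ι K : Type*} [Fintype ι] [DecidableEq ι] [Field K]

/-- The SP-BFGS update of the inverse Hessian approximation `H`. The scalars `γ` and `ω` are
kept as parameters; they belong to the penalty parameter `β = 1/τ` when `γ (sᵀy + τ) = 1` and
`ω (sᵀy + 2τ) = 1`, and `τ = 0` then gives the BFGS update. -/
def spbfgsUpdate (γ ω : K) (s y : ι → K) (H : Matrix ι ι K) : Matrix ι ι K :=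
  (1 - ω • vecMulVec s y) * H * (1 - ω • vecMulVec y s) +
    (ω * (γ / ω + (γ - ω) * (y ⬝ᵥ H *ᵥ y))) • vecMulVec s s

variable {γ ω τ : K} {s y : ι → K} {H : Matrix ι ι K}

lemma spbfgsUpdate_eq_transpose_mul_mul_add
    (hγ : γ * (s ⬝ᵥ y + τ) = 1) (hω : ω * (s ⬝ᵥ y + 2 * τ) = 1) :
    spbfgsUpdate γ ω s y H =
      (1 - ω • vecMulVec y s)ᵀ * H * (1 - ω • vecMulVec y s) +
        (γ * (1 + τ * ω ^ 2 * (y ⬝ᵥ H *ᵥ y))) • vecMulVec s s := by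
  have hB : (1 - ω • vecMulVec y s)ᵀ = 1 - ω • vecMulVec s y := by
    rw [transpose_sub, transpose_one, transpose_smul, transpose_vecMulVec]
  have hω₀ : ω ≠ 0 := left_ne_zero_of_mul_eq_one hω
  have hsub : γ - ω = τ * γ * ω := by linear_combination ω * hγ - γ * hω
  have hcoeff : ω * (γ / ω + (γ - ω) * (y ⬝ᵥ H *ᵥ y)) =
      γ * (1 + τ * ω ^ 2 * (y ⬝ᵥ H *ᵥ y)) := by
    rw [hsub]
    field_simp
  rw [spbfgsUpdate, hB, hcoeff]

lemma dotProduct_spbfgsUpdate_mulVec_self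
    (hγ : γ * (s ⬝ᵥ y + τ) = 1) (hω : ω * (s ⬝ᵥ y + 2 * τ) = 1) :
    y ⬝ᵥ spbfgsUpdate γ ω s y H *ᵥ y = γ * ((s ⬝ᵥ y) ^ 2 + τ * (y ⬝ᵥ H *ᵥ y)) := by
  have hBy : (1 - ω • vecMulVec y s) *ᵥ y = (2 * τ * ω) • y := by
    have hcoeff : 1 - ω * (s ⬝ᵥ y) = 2 * τ * ω := by linear_combination -hω
    rw [one_sub_smul_vecMulVec_mulVec, ← hcoeff, sub_smul, one_smul]
  have hcongr : y ⬝ᵥ ((1 - ω • vecMulVec y s)ᵀ * H * (1 - ω • vecMulVec y s)) *ᵥ y =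
      (2 * τ * ω) ^ 2 * (y ⬝ᵥ H *ᵥ y) := by
    rw [dotProduct_mul_mul_mulVec, vecMul_transpose, hBy, mulVec_smul, dotProduct_smul,
      smul_dotProduct, smul_eq_mul, smul_eq_mul, ← mul_assoc, ← sq]
  rw [spbfgsUpdate_eq_transpose_mul_mul_add hγ hω, add_mulVec, dotProduct_add, hcongr,
    dotProduct_smul_vecMulVec_self_mulVec]
  linear_combination (y ⬝ᵥ H *ᵥ y) *
    (γ * τ * (ω * (s ⬝ᵥ y + 2 * τ) + 1) * hω - 4 * τ ^ 2 * ω ^ 2 * hγ)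

variable [LinearOrder K] [IsStrictOrderedRing K] [StarRing K] [TrivialStar K]

lemma posDef_spbfgsUpdate (hH : H.PosDef) (hτ : 0 ≤ τ) (hγ : γ * (s ⬝ᵥ y + τ) = 1)
    (hω : ω * (s ⬝ᵥ y + 2 * τ) = 1) (hγ₀ : 0 < γ) : (spbfgsUpdate γ ω s y H).PosDef := by
  have hyHy : 0 ≤ y ⬝ᵥ H *ᵥ y := by
    simpa only [star_trivial] using hH.posSemidef.dotProduct_mulVec_nonneg y
  have hcoeff : 0 < γ * (1 + τ * ω ^ 2 * (y ⬝ᵥ H *ᵥ y)) := by positivity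
  rw [spbfgsUpdate_eq_transpose_mul_mul_add hγ hω, ← conjTranspose_eq_transpose_of_trivial]
  refine posDef_conjTranspose_mul_mul_add hH (posSemidef_smul_vecMulVec_self hcoeff.le s)
    fun x hx hBx => ?_
  have hsx : s ⬝ᵥ x ≠ 0 := by
    intro hsx
    rw [one_sub_smul_vecMulVec_mulVec, hsx, mul_zero, zero_smul, sub_zero] at hBx
    exact hx hBx
  rw [star_trivial, dotProduct_smul_vecMulVec_self_mulVec]
  positivity

lemma pos_of_posDef_spbfgsUpdate (hH : H.PosSemidef) (hτ : 0 ≤ τ)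
    (hγ : γ * (s ⬝ᵥ y + τ) = 1) (hω : ω * (s ⬝ᵥ y + 2 * τ) = 1)
    (hpos : (spbfgsUpdate γ ω s y H).PosDef) : 0 < γ := by
  obtain rfl | hy := eq_or_ne y 0
  · rw [dotProduct_zero, zero_add] at hγ
    exact pos_of_mul_pos_left (hγ ▸ one_pos) hτ
  · have hyHy : 0 ≤ y ⬝ᵥ H *ᵥ y := by
      simpa only [star_trivial] using hH.dotProduct_mulVec_nonneg y
    have hquad := hpos.dotProduct_mulVec_pos hy
    rw [star_trivial, dotProduct_spbfgsUpdate_mulVec_self hγ hω] at hquad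
    exact pos_of_mul_pos_left hquad (by positivity)

theorem spbfgs_posdef_iff_general (hH : H.PosDef) (hτ : 0 ≤ τ)
    (hγ : γ * (s ⬝ᵥ y + τ) = 1) (hω : ω * (s ⬝ᵥ y + 2 * τ) = 1) :
    (spbfgsUpdate γ ω s y H).PosDef ↔ -τ < s ⬝ᵥ y := by
  have hγ_pos_iff : 0 < γ ↔ -τ < s ⬝ᵥ y := by
    rw [neg_lt_iff_pos_add, pos_iff_pos_of_mul_pos (hγ ▸ one_pos)]
  rw [← hγ_pos_iff]
  exact ⟨pos_of_posDef_spbfgsUpdate hH.posSemidef hτ hγ hω, posDef_spbfgsUpdate hH hτ hγ hω⟩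

end Update

/-- **Positive definiteness of the SP-BFGS update.**
For symmetric positive definite `H` and `y ≠ 0`, the SP-BFGS update `Hplus` is positive
definite if and only if the SP-BFGS curvature condition `sᵀy > −1/β` holds. -/
theorem spbfgs_posdef_iff
    {n : ℕ} (s y : Fin n → ℝ) (hy : y ≠ 0)
    (H : Matrix (Fin n) (Fin n) ℝ) (hH : H.PosDef)
    (β : ℝ) (hβ : 0 < β)
    (h1 : s ⬝ᵥ y + 1 / β ≠ 0) (h2 : s ⬝ᵥ y + 2 / β ≠ 0)
    (γ ω : ℝ) (hγ : γ = 1 / (s ⬝ᵥ y + 1 / β)) (hω : ω = 1 / (s ⬝ᵥ y + 2 / β))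
    (Hplus : Matrix (Fin n) (Fin n) ℝ)
    (hHplus : Hplus =
      (1 - ω • vecMulVec s y) * H * (1 - ω • vecMulVec y s) +
        (ω * (γ / ω + (γ - ω) * (y ⬝ᵥ H *ᵥ y))) • vecMulVec s s) :
    Hplus.PosDef ↔ -(1 / β) < s ⬝ᵥ y := by
  rw [hHplus, ← spbfgsUpdate]
  exact spbfgs_posdef_iff_general hH (one_div_nonneg.2 hβ.le)
    (by rw [hγ, one_div_mul_cancel h1]) (by rw [hω, mul_one_div, one_div_mul_cancel h2])
end

section
/- Let H be a symmetric positive definite n×n real matrix, let s, y ∈ ℝⁿ, let ω ∈ ℝ and d > 0, and set G = I − ω y sᵀ. Then the matrix Gᵀ H G + d s sᵀ is symmetric positive definite. -/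
open Matrix

section QuadraticForms

variable {R m n : Type*} [Fintype m] [Fintype n] [NonUnitalSemiring R] [StarRing R]

theorem star_dotProduct_conjTranspose_mul_mul_mulVec
    (A : Matrix m m R) (B : Matrix m n R) (v : n → R) :
    star v ⬝ᵥ (Bᴴ * A * B) *ᵥ v = star (B *ᵥ v) ⬝ᵥ A *ᵥ (B *ᵥ v) := by
  simp only [star_mulVec, dotProduct_mulVec, vecMul_vecMul]

theorem star_dotProduct_vecMulVec_star_mulVec (s v : n → R) :
    star v ⬝ᵥ vecMulVec (star s) s *ᵥ v = star (s ⬝ᵥ v) * (s ⬝ᵥ v) := by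
  rw [dotProduct_mulVec, vecMul_vecMulVec, smul_dotProduct, star_dotProduct_star, smul_eq_mul]

end QuadraticForms

theorem one_sub_smul_vecMulVec_mulVec_of_dotProduct_eq_zero {R n : Type*} [Fintype n]
    [DecidableEq n] [Ring R] (ω : R) (y : n → R) {s v : n → R} (hsv : s ⬝ᵥ v = 0) :
    (1 - ω • vecMulVec y s) *ᵥ v = v := by
  rw [sub_mulVec, one_mulVec, smul_mulVec, vecMulVec_mulVec, hsv, MulOpposite.op_zero, zero_smul,
    smul_zero, sub_zero]

section PosDef

variable {𝕜 R m n : Type*} [Fintype n]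
  [CommSemiring 𝕜] [PartialOrder 𝕜] [StarRing 𝕜] [StarOrderedRing 𝕜]
  [Ring R] [PartialOrder R] [StarRing R] [StarOrderedRing R] [NoZeroDivisors R]
  [Algebra 𝕜 R] [StarModule 𝕜 R] [PosSMulStrictMono 𝕜 R]

theorem posDef_add_smul_vecMulVec_of_pos_of_dotProduct_eq_zero {A : Matrix n n R}
    (hA : A.PosSemidef) {d : 𝕜} (hd : 0 < d) {s : n → R}
    (hAs : ∀ v, v ≠ 0 → s ⬝ᵥ v = 0 → 0 < star v ⬝ᵥ A *ᵥ v) :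
    (A + d • vecMulVec (star s) s).PosDef := by
  have hss : (d • vecMulVec (star s) s).PosSemidef := (posSemidef_vecMulVec_star_self s).smul hd.le
  refine .of_dotProduct_mulVec_pos (hA.add hss).isHermitian fun v hv => ?_
  rw [add_mulVec, dotProduct_add]
  by_cases hsv : s ⬝ᵥ v = 0
  · exact add_pos_of_pos_of_nonneg (hAs v hv hsv) (hss.dotProduct_mulVec_nonneg v)
  · have : Nontrivial R := nontrivial_of_ne _ _ hsv
    have hrank : 0 < star v ⬝ᵥ (d • vecMulVec (star s) s) *ᵥ v := by
      rw [smul_mulVec, dotProduct_smul, star_dotProduct_vecMulVec_star_mulVec]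
      exact smul_pos hd (star_mul_self_pos (.of_ne_zero hsv))
    exact add_pos_of_nonneg_of_pos (hA.dotProduct_mulVec_nonneg v) hrank

theorem posDef_conjTranspose_mul_mul_add_smul_vecMulVec [Fintype m] {H : Matrix m m R}
    (hH : H.PosDef) {d : 𝕜} (hd : 0 < d) {G : Matrix m n R} {s : n → R}
    (hGs : ∀ v, s ⬝ᵥ v = 0 → G *ᵥ v = 0 → v = 0) :
    (Gᴴ * H * G + d • vecMulVec (star s) s).PosDef := by
  refine posDef_add_smul_vecMulVec_of_pos_of_dotProduct_eq_zero
    (hH.posSemidef.conjTranspose_mul_mul_same G) hd fun v hv hsv => ?_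
  rw [star_dotProduct_conjTranspose_mul_mul_mulVec]
  exact hH.dotProduct_mulVec_pos (mt (hGs v hsv) hv)

/- The rank-one term is `s̄ sᵀ` rather than `s sᴴ`, so that its kernel `{v | sᵀ v = 0}` is a space
on which `G` acts as the identity. -/
theorem gthg_add_rank_one_posDef_general [DecidableEq n] {H : Matrix n n R} (hH : H.PosDef)
    (s y : n → R) (ω : R) {d : 𝕜} (hd : 0 < d) {G : Matrix n n R}
    (hG : G = 1 - ω • vecMulVec y s) :
    (Gᴴ * H * G + d • vecMulVec (star s) s).PosDef := by
  refine posDef_conjTranspose_mul_mul_add_smul_vecMulVec hH hd fun v hsv hGv => ?_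
  rwa [hG, one_sub_smul_vecMulVec_mulVec_of_dotProduct_eq_zero ω y hsv] at hGv

end PosDef

/-- **Structural positive definiteness fact for SP-BFGS.**
If `H` is symmetric positive definite, `G = I − ω y sᵀ`, and `d > 0`, then
`Gᵀ H G + d s sᵀ` is symmetric positive definite. -/
theorem gthg_add_rank_one_posDef
    {n : ℕ} (H : Matrix (Fin n) (Fin n) ℝ) (hH : H.PosDef)
    (s y : Fin n → ℝ) (ω d : ℝ) (hd : 0 < d)
    (G : Matrix (Fin n) (Fin n) ℝ) (hG : G = 1 - ω • vecMulVec y s) :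
    (Gᵀ * H * G + d • vecMulVec s s).PosDef := by
  simpa only [conjTranspose_eq_transpose_of_trivial, star_trivial] using
    gthg_add_rank_one_posDef_general hH s y ω hd hG
end

section
/- Let s, y ∈ ℝⁿ with s ≠ 0, let H be a symmetric positive definite n×n real matrix with B = H⁻¹, and let β > 0 satisfy sᵀy > −1/β. Set γ = 1/(sᵀy + 1/β), ω = 1/(sᵀy + 2/β), and let H₊ be the SP-BFGS update of H with data (s, y, β). Then the scalar Δ = ((ω − γ)(yᵀ B⁻¹ y) − γ/ω)(ω sᵀ B s) − (1 − ω yᵀs)² is nonzero, H₊ is invertible, and H₊⁻¹ = B − ω[((ω − γ)(yᵀ B⁻¹ y) − γ/ω) B s sᵀ B + (1 − ω sᵀy)(B s yᵀ + y sᵀ B) + ω (sᵀ B s) y yᵀ]/Δ. -/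
open Matrix

/-!
With `δ = (ω - γ) (yᵀ H y) - γ / ω`, the update is `(I - ω s yᵀ) H (I - ω y sᵀ) - ω δ s sᵀ`, that
is, `H + U C V` where `U` has columns `s, H y`, `V` has rows `sᵀ, yᵀ H`, and `C` is `2 × 2`. Here
`V H⁻¹ U` has rows `(a, b)` and `(b, q)` with `a = sᵀ H⁻¹ s`, `b = sᵀ y` and `q = yᵀ H y`, so the
Woodbury identity reduces the inversion of `H₊` to that of `I + (V H⁻¹ U) C`. This `2 × 2` matrix
has determinant `-Δ`, and `C (I + (V H⁻¹ U) C)⁻¹ = (ω / Δ) M` for the matrix `M` with rows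
`(δ, 1 - ω b)` and `(1 - ω b, ω a)`, whose determinant is `Δ`. Finally `Δ < 0`: nonnegativity of
the quadratic form of `H` gives `δ ≤ 0` and `a ≥ 0`, while `1 - ω b = 2 ω / β > 0`.
-/

section Woodbury

variable {m n R : Type*} [Fintype m] [DecidableEq m] [Fintype n] [DecidableEq n] [CommRing R]

-- `Matrix.add_mul_mul_inv_eq_sub` needs `C` invertible; absorbing `C` into `U` avoids this.
theorem inv_add_mul_mul_of_isUnit_one_add {A : Matrix n n R} {U : Matrix n m R} {C : Matrix m m R}
    {V : Matrix m n R} (hA : IsUnit A.det) (hcap : IsUnit (1 + V * A⁻¹ * U * C).det) :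
    (A + U * C * V)⁻¹ = A⁻¹ - A⁻¹ * U * (C * (1 + V * A⁻¹ * U * C)⁻¹) * (V * A⁻¹) := by
  have hwoodbury := add_mul_mul_inv_eq_sub A (U * C) 1 V ((isUnit_iff_isUnit_det A).mpr hA)
    isUnit_one (by rwa [inv_one, ← Matrix.mul_assoc, isUnit_iff_isUnit_det])
  simpa only [inv_one, Matrix.mul_one, Matrix.mul_assoc] using hwoodbury

end Woodbury

section RowPair

variable {m n R : Type*} [CommRing R]

/-- The matrix with rows `x₁` and `x₂`; its transpose, with columns `x₁` and `x₂`, serves as the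
other factor of a rank-two update. -/
def rowPair (x₁ x₂ : n → R) : Matrix (Fin 2) n R :=
  of ![x₁, x₂]

theorem transpose_rowPair_mul_mul_rowPair (x₁ x₂ : m → R) (y₁ y₂ : n → R) (a b c d : R) :
    (rowPair x₁ x₂)ᵀ * !![a, b; c, d] * rowPair y₁ y₂ =
      a • vecMulVec x₁ y₁ + b • vecMulVec x₁ y₂ + c • vecMulVec x₂ y₁ + d • vecMulVec x₂ y₂ := by
  ext i j
  simp only [rowPair, mul_apply, Fin.sum_univ_two, vecMulVec_apply, transpose_apply, of_apply,
    cons_val', cons_val_zero, cons_val_one, cons_val_fin_one, Matrix.add_apply, Matrix.smul_apply,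
    smul_eq_mul]
  ring

theorem rowPair_mul_transpose_rowPair [Fintype n] (x₁ x₂ y₁ y₂ : n → R) :
    rowPair x₁ x₂ * (rowPair y₁ y₂)ᵀ = !![x₁ ⬝ᵥ y₁, x₁ ⬝ᵥ y₂; x₂ ⬝ᵥ y₁, x₂ ⬝ᵥ y₂] := by
  ext i j
  fin_cases i <;> fin_cases j <;> rfl

theorem rowPair_mul [Fintype m] (x₁ x₂ : m → R) (A : Matrix m n R) :
    rowPair x₁ x₂ * A = rowPair (x₁ ᵥ* A) (x₂ ᵥ* A) := by
  ext i j
  fin_cases i <;> rfl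

theorem mul_transpose_rowPair [Fintype n] (A : Matrix m n R) (x₁ x₂ : n → R) :
    A * (rowPair x₁ x₂)ᵀ = (rowPair (A *ᵥ x₁) (A *ᵥ x₂))ᵀ := by
  ext i j
  fin_cases j <;> rfl

end RowPair

/-- The BFGS-type update of an inverse Hessian approximation `H` with free scalars `ω` and `δ`. The
BFGS update is the case `ω = 1 / sᵀy`, `δ = -1`; the SP-BFGS update is the case
`δ = (ω - γ) (yᵀ H y) - γ / ω`. -/
def bfgsUpdate {ι R : Type*} [Fintype ι] [DecidableEq ι] [CommRing R] (ω δ : R)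
    (s y : ι → R) (H : Matrix ι ι R) : Matrix ι ι R :=
  (1 - ω • vecMulVec s y) * H * (1 - ω • vecMulVec y s) - (ω * δ) • vecMulVec s s

section Core

variable {R : Type*} [CommRing R]

/-- The middle factor `C` in `bfgsUpdate ω δ s y H = H + U * C * V`, where `q = yᵀ H y`. -/
def bfgsMiddle (ω δ q : R) : Matrix (Fin 2) (Fin 2) R :=
  !![ω ^ 2 * q - ω * δ, -ω; -ω, 0]

/-- The middle factor `M`, up to the scalar `ω / Δ`, of the rank-two update that inverts
`bfgsUpdate ω δ s y H`, where `a = sᵀ H⁻¹ s` and `b = sᵀ y`. Its determinant is `Δ`. -/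
def bfgsCore (ω δ a b : R) : Matrix (Fin 2) (Fin 2) R :=
  !![δ, 1 - ω * b; 1 - ω * b, ω * a]

theorem det_bfgsCore (ω δ a b : R) :
    (bfgsCore ω δ a b).det = δ * (ω * a) - (1 - ω * b) ^ 2 := by
  rw [bfgsCore, det_fin_two_of, sq]

theorem one_add_mul_bfgsMiddle (ω δ a b q : R) :
    1 + !![a, b; b, q] * bfgsMiddle ω δ q =
      !![1 - ω * b + a * (ω ^ 2 * q - ω * δ), -(ω * a);
        b * (ω ^ 2 * q - ω * δ) - ω * q, 1 - ω * b] := by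
  rw [bfgsMiddle, one_fin_two, mul_fin_two, of_add_of, EmbeddingLike.apply_eq_iff_eq]
  simp only [cons_add_cons, empty_add_empty, vecCons_inj, and_true]
  refine ⟨⟨?_, ?_⟩, ?_, ?_⟩ <;> ring

theorem det_one_add_mul_bfgsMiddle (ω δ a b q : R) :
    (1 + !![a, b; b, q] * bfgsMiddle ω δ q).det = -(bfgsCore ω δ a b).det := by
  rw [one_add_mul_bfgsMiddle, det_fin_two_of, det_bfgsCore]
  ring

theorem smul_bfgsCore_mul_one_add_mul_bfgsMiddle (ω δ a b q : R) :
    ω • (bfgsCore ω δ a b * (1 + !![a, b; b, q] * bfgsMiddle ω δ q)) =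
      (bfgsCore ω δ a b).det • bfgsMiddle ω δ q := by
  rw [one_add_mul_bfgsMiddle, det_bfgsCore, bfgsMiddle, bfgsCore, mul_fin_two, smul_of, smul_of,
    EmbeddingLike.apply_eq_iff_eq]
  simp only [smul_cons, smul_empty, smul_eq_mul, vecCons_inj, and_true]
  refine ⟨⟨?_, ?_⟩, ?_, ?_⟩ <;> ring

theorem transpose_rowPair_mul_bfgsCore_mul_rowPair {ι : Type*} [Fintype ι] (ω δ a b : R)
    (s y : ι → R) (B : Matrix ι ι R) :
    (rowPair (B *ᵥ s) y)ᵀ * bfgsCore ω δ a b * rowPair (s ᵥ* B) y =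
      δ • (B * vecMulVec s s * B) + (1 - ω * b) • (B * vecMulVec s y + vecMulVec y s * B) +
        (ω * a) • vecMulVec y y := by
  rw [bfgsCore, transpose_rowPair_mul_mul_rowPair]
  simp only [mul_vecMulVec, vecMulVec_mul]
  module

theorem bfgsMiddle_mul_inv_one_add_mul {K : Type*} [Field K] {ω δ a b : K} (q : K)
    (hΔ : (bfgsCore ω δ a b).det ≠ 0) :
    bfgsMiddle ω δ q * (1 + !![a, b; b, q] * bfgsMiddle ω δ q)⁻¹ =
      (ω / (bfgsCore ω δ a b).det) • bfgsCore ω δ a b := by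
  have hdet : IsUnit (1 + !![a, b; b, q] * bfgsMiddle ω δ q).det := by
    rw [det_one_add_mul_bfgsMiddle]
    exact (neg_ne_zero.mpr hΔ).isUnit
  have hmiddle : bfgsMiddle ω δ q = (ω / (bfgsCore ω δ a b).det) •
      (bfgsCore ω δ a b * (1 + !![a, b; b, q] * bfgsMiddle ω δ q)) := by
    rw [div_eq_inv_mul, mul_smul, smul_bfgsCore_mul_one_add_mul_bfgsMiddle, inv_smul_smul₀ hΔ]
  nth_rewrite 1 [hmiddle]
  rw [smul_mul_assoc, mul_nonsing_inv_cancel_right _ _ hdet]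

end Core

section Update

variable {ι R K : Type*} [Fintype ι] [DecidableEq ι] [CommRing R] [Field K]

theorem bfgsUpdate_eq_add_mul_mul (ω δ : R) (s y : ι → R) (H : Matrix ι ι R) :
    bfgsUpdate ω δ s y H =
      H + (rowPair s (H *ᵥ y))ᵀ * bfgsMiddle ω δ (y ⬝ᵥ H *ᵥ y) * rowPair s (y ᵥ* H) := by
  rw [bfgsUpdate, bfgsMiddle, transpose_rowPair_mul_mul_rowPair]
  simp only [sub_mul, mul_sub, one_mul, mul_one, smul_mul_assoc, mul_smul_comm, mul_vecMulVec,
    vecMulVec_mul, vecMulVec_mulVec, smul_vecMulVec, op_smul_eq_smul, ← dotProduct_mulVec]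
  module

theorem rowPair_mul_inv_mul_transpose_rowPair (s y : ι → R) {H : Matrix ι ι R}
    (hH : IsUnit H.det) :
    rowPair s (y ᵥ* H) * H⁻¹ * (rowPair s (H *ᵥ y))ᵀ =
      !![s ⬝ᵥ H⁻¹ *ᵥ s, s ⬝ᵥ y; s ⬝ᵥ y, y ⬝ᵥ H *ᵥ y] := by
  rw [Matrix.mul_assoc, mul_transpose_rowPair, rowPair_mul_transpose_rowPair]
  simp only [mulVec_mulVec, ← dotProduct_mulVec, nonsing_inv_mul _ hH,
    mul_nonsing_inv _ hH, one_mulVec, dotProduct_comm y s]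

theorem det_bfgsUpdate (ω δ : R) (s y : ι → R) {H : Matrix ι ι R} (hH : IsUnit H.det) :
    (bfgsUpdate ω δ s y H).det =
      -(H.det * (bfgsCore ω δ (s ⬝ᵥ H⁻¹ *ᵥ s) (s ⬝ᵥ y)).det) := by
  rw [bfgsUpdate_eq_add_mul_mul, det_add_mul _ _ hH, ← Matrix.mul_assoc,
    rowPair_mul_inv_mul_transpose_rowPair s y hH, det_one_add_mul_bfgsMiddle, mul_neg]

theorem inv_bfgsUpdate {ω δ Δ : K} {s y : ι → K} {H : Matrix ι ι K} (hH : IsUnit H.det)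
    (hΔ : Δ = (bfgsCore ω δ (s ⬝ᵥ H⁻¹ *ᵥ s) (s ⬝ᵥ y)).det) (hΔ₀ : Δ ≠ 0) :
    (bfgsUpdate ω δ s y H)⁻¹ =
      H⁻¹ - (ω / Δ) • (δ • (H⁻¹ * vecMulVec s s * H⁻¹) +
        (1 - ω * (s ⬝ᵥ y)) • (H⁻¹ * vecMulVec s y + vecMulVec y s * H⁻¹) +
        (ω * (s ⬝ᵥ H⁻¹ *ᵥ s)) • vecMulVec y y) := by
  subst hΔ
  have hgram := rowPair_mul_inv_mul_transpose_rowPair s y hH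
  have hcap : IsUnit (1 + rowPair s (y ᵥ* H) * H⁻¹ * (rowPair s (H *ᵥ y))ᵀ *
      bfgsMiddle ω δ (y ⬝ᵥ H *ᵥ y)).det := by
    rw [hgram, det_one_add_mul_bfgsMiddle]
    exact (neg_ne_zero.mpr hΔ₀).isUnit
  have hU : H⁻¹ * (rowPair s (H *ᵥ y))ᵀ = (rowPair (H⁻¹ *ᵥ s) y)ᵀ := by
    rw [mul_transpose_rowPair, mulVec_mulVec, nonsing_inv_mul _ hH, one_mulVec]
  have hV : rowPair s (y ᵥ* H) * H⁻¹ = rowPair (s ᵥ* H⁻¹) y := by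
    rw [rowPair_mul, vecMul_vecMul, mul_nonsing_inv _ hH, vecMul_one]
  rw [bfgsUpdate_eq_add_mul_mul, inv_add_mul_mul_of_isUnit_one_add hH hcap, hgram,
    bfgsMiddle_mul_inv_one_add_mul _ hΔ₀, hU, hV, Matrix.mul_smul, Matrix.smul_mul,
    transpose_rowPair_mul_bfgsCore_mul_rowPair]

theorem spbfgs_eq_bfgsUpdate (γ ω : K) (s y : ι → K) (H : Matrix ι ι K) :
    (1 - ω • vecMulVec s y) * H * (1 - ω • vecMulVec y s) +
        (ω * (γ / ω + (γ - ω) * (y ⬝ᵥ H *ᵥ y))) • vecMulVec s s =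
      bfgsUpdate ω ((ω - γ) * (y ⬝ᵥ H *ᵥ y) - γ / ω) s y H := by
  rw [bfgsUpdate]
  module

end Update

section Curvature

theorem dotProduct_inv_mulVec_nonneg {ι R : Type*} [Fintype ι] [DecidableEq ι] [CommRing R] [LE R]
    {H : Matrix ι ι R} (hH : IsUnit H.det) (hnonneg : ∀ x, 0 ≤ x ⬝ᵥ H *ᵥ x) (x : ι → R) :
    0 ≤ x ⬝ᵥ H⁻¹ *ᵥ x := by
  have h := hnonneg (H⁻¹ *ᵥ x)
  rwa [mulVec_mulVec, mul_nonsing_inv _ hH, one_mulVec, dotProduct_comm] at h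

variable {K : Type*} [Field K] [LinearOrder K] [IsStrictOrderedRing K]

theorem det_bfgsCore_neg {ω δ a b : K} (hω : 0 ≤ ω) (hδ : δ ≤ 0) (ha : 0 ≤ a) (hb : ω * b ≠ 1) :
    (bfgsCore ω δ a b).det < 0 := by
  rw [det_bfgsCore, sub_neg]
  calc δ * (ω * a) ≤ 0 := mul_nonpos_of_nonpos_of_nonneg hδ (mul_nonneg hω ha)
    _ < (1 - ω * b) ^ 2 := sq_pos_of_ne_zero (sub_ne_zero.mpr hb.symm)

theorem det_bfgsCore_neg_of_curvature {a b q β γ ω : K} (hβ : 0 < β) (hcurv : -(1 / β) < b)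
    (hγ : γ = 1 / (b + 1 / β)) (hω : ω = 1 / (b + 2 / β)) (ha : 0 ≤ a) (hq : 0 ≤ q) :
    (bfgsCore ω ((ω - γ) * q - γ / ω) a b).det < 0 := by
  have hβ' : 0 < 1 / β := one_div_pos.mpr hβ
  have htwo : 2 / β = 1 / β + 1 / β := by ring
  have hγ_den : 0 < b + 1 / β := by linarith
  have hω_den : 0 < b + 2 / β := by linarith
  have hγ_pos : 0 < γ := hγ ▸ one_div_pos.mpr hγ_den
  have hω_pos : 0 < ω := hω ▸ one_div_pos.mpr hω_den
  have hω_le_γ : ω ≤ γ := by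
    rw [hω, hγ]
    exact one_div_le_one_div_of_le hγ_den (by linarith)
  have hδ : (ω - γ) * q - γ / ω ≤ 0 := sub_nonpos.mpr <|
    (mul_nonpos_of_nonpos_of_nonneg (sub_nonpos.mpr hω_le_γ) hq).trans (div_pos hγ_pos hω_pos).le
  have hωb : ω * b < 1 := by
    rw [hω, one_div_mul_eq_div, div_lt_one hω_den]
    linarith
  exact det_bfgsCore_neg hω_pos.le hδ ha hωb.ne

end Curvature

theorem spbfgs_inverse_update_general
    {ι K : Type*} [Fintype ι] [DecidableEq ι] [Field K] [LinearOrder K] [IsStrictOrderedRing K]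
    (s y : ι → K) (H : Matrix ι ι K) (hH : IsUnit H.det) (hnonneg : ∀ x, 0 ≤ x ⬝ᵥ H *ᵥ x)
    (B : Matrix ι ι K) (hB : B = H⁻¹)
    (β : K) (hβ : 0 < β) (hcurv : -(1 / β) < s ⬝ᵥ y)
    (γ ω : K) (hγ : γ = 1 / (s ⬝ᵥ y + 1 / β)) (hω : ω = 1 / (s ⬝ᵥ y + 2 / β))
    (Hplus : Matrix ι ι K)
    (hHplus : Hplus =
      (1 - ω • vecMulVec s y) * H * (1 - ω • vecMulVec y s) +
        (ω * (γ / ω + (γ - ω) * (y ⬝ᵥ H *ᵥ y))) • vecMulVec s s)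
    (Δ : K)
    (hΔ : Δ = ((ω - γ) * (y ⬝ᵥ B⁻¹ *ᵥ y) - γ / ω) * (ω * (s ⬝ᵥ B *ᵥ s)) -
        (1 - ω * (y ⬝ᵥ s)) ^ 2) :
    Δ ≠ 0 ∧ IsUnit Hplus.det ∧
      Hplus⁻¹ = B - (ω / Δ) •
        (((ω - γ) * (y ⬝ᵥ B⁻¹ *ᵥ y) - γ / ω) • (B * vecMulVec s s * B) +
          (1 - ω * (s ⬝ᵥ y)) • (B * vecMulVec s y + vecMulVec y s * B) +
          (ω * (s ⬝ᵥ B *ᵥ s)) • vecMulVec y y) := by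
  subst hB hHplus
  rw [nonsing_inv_nonsing_inv H hH, dotProduct_comm y s, ← det_bfgsCore] at hΔ
  rw [nonsing_inv_nonsing_inv H hH, spbfgs_eq_bfgsUpdate]
  have hΔ₀ : Δ ≠ 0 := hΔ ▸ (det_bfgsCore_neg_of_curvature hβ hcurv hγ hω
    (dotProduct_inv_mulVec_nonneg hH hnonneg s) (hnonneg y)).ne
  refine ⟨hΔ₀, ?_, inv_bfgsUpdate hH hΔ hΔ₀⟩
  rw [det_bfgsUpdate _ _ _ _ hH, ← hΔ]
  exact (hH.mul hΔ₀.isUnit).neg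

/-- **SP-BFGS inverse update (Sherman–Morrison–Woodbury form).**
Under the SP-BFGS curvature condition, the scalar `Δ` is nonzero, `H₊` is invertible, and
`H₊⁻¹ = B − ω[ D̂ B s sᵀ B + (1 − ω sᵀy)(B s yᵀ + y sᵀ B) + ω (sᵀ B s) y yᵀ ]/Δ`
where `D̂ = (ω − γ)(yᵀ B⁻¹ y) − γ/ω` and `Δ = D̂ (ω sᵀ B s) − (1 − ω yᵀs)²`. -/
theorem spbfgs_inverse_update
    {n : ℕ} (s y : Fin n → ℝ) (hs : s ≠ 0)
    (H : Matrix (Fin n) (Fin n) ℝ) (hH : H.PosDef)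
    (B : Matrix (Fin n) (Fin n) ℝ) (hB : B = H⁻¹)
    (β : ℝ) (hβ : 0 < β) (hcurv : -(1 / β) < s ⬝ᵥ y)
    (γ ω : ℝ) (hγ : γ = 1 / (s ⬝ᵥ y + 1 / β)) (hω : ω = 1 / (s ⬝ᵥ y + 2 / β))
    (Hplus : Matrix (Fin n) (Fin n) ℝ)
    (hHplus : Hplus =
      (1 - ω • vecMulVec s y) * H * (1 - ω • vecMulVec y s) +
        (ω * (γ / ω + (γ - ω) * (y ⬝ᵥ H *ᵥ y))) • vecMulVec s s)
    (Δ : ℝ)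
    (hΔ : Δ = ((ω - γ) * (y ⬝ᵥ B⁻¹ *ᵥ y) - γ / ω) * (ω * (s ⬝ᵥ B *ᵥ s)) -
        (1 - ω * (y ⬝ᵥ s)) ^ 2) :
    Δ ≠ 0 ∧ IsUnit Hplus.det ∧
      Hplus⁻¹ = B - (ω / Δ) •
        (((ω - γ) * (y ⬝ᵥ B⁻¹ *ᵥ y) - γ / ω) • (B * vecMulVec s s * B) +
          (1 - ω * (s ⬝ᵥ y)) • (B * vecMulVec s y + vecMulVec y s * B) +
          (ω * (s ⬝ᵥ B *ᵥ s)) • vecMulVec y y) :=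
  spbfgs_inverse_update_general s y H hH.det_pos.ne'.isUnit
    (fun x ↦ by simpa using hH.posSemidef.dotProduct_mulVec_nonneg x)
    B hB β hβ hcurv γ ω hγ hω Hplus hHplus Δ hΔ
end
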